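/- There exist constants c > 0 and C ≥ 1 such that for every integer n ≥ 2 and every integer α ≥ 1 there is an instance (J',M') of P||C_max with at most C·α·n jobs, at most C·α·n machines, and processing times p_j ∈ {1,2}, such that the polytope Q̃ = conv{ x^σ : σ is a schedule of (J',M') with makespan at most α·opt(J',M') } satisfies xc(Q̃) ≥ 2^{c·n/log n}. -/

import Mathlib

open Finset

noncomputable section

/-- An extended formulation of size `k` (number of inequalities) for `P ⊆ ℝ^ι`. -/
def IsEF {ι : Type} [Fintype ι] (P : Set (ι → ℝ)) (k : ℕ) : Prop :=
  ∃ (e l : ℕ) (A : Matrix (Fin k) (Fin e) ℝ) (b : Fin k → ℝ)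
    (C : Matrix (Fin l) (Fin e) ℝ) (d : Fin l → ℝ)
    (π : (Fin e → ℝ) →ᵃ[ℝ] (ι → ℝ)),
    π '' {y | (∀ r, A.mulVec y r ≤ b r) ∧ (∀ r, C.mulVec y r = d r)} = P

/-- The extension complexity of `P`. -/
noncomputable def xc {ι : Type} [Fintype ι] (P : Set (ι → ℝ)) : ℕ :=
  sInf {k | IsEF P k}

/-- The load of machine `i` under schedule `σ`. -/
def load {n m : ℕ} (p : Fin n → ℕ) (σ : Fin n → Fin m) (i : Fin m) : ℕ :=
  ∑ j, if σ j = i then p j else 0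

/-- The makespan of a schedule: the maximum machine load. -/
def makespan {n m : ℕ} (p : Fin n → ℕ) (σ : Fin n → Fin m) : ℕ :=
  Finset.univ.sup (load p σ)

/-- The optimal makespan of the instance. -/
noncomputable def optMakespan (n m : ℕ) (p : Fin n → ℕ) : ℕ :=
  sInf {t | ∃ σ : Fin n → Fin m, makespan p σ = t}

/-- The 0/1 assignment vector of a schedule, indexed by machine-job pairs. -/
def assignVec {n m : ℕ} (σ : Fin n → Fin m) : Fin m × Fin n → ℝ :=
  fun q => if σ q.2 = q.1 then 1 else 0

/-- `Q(J,M)`: the convex hull of the assignment vectors of all schedules. -/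
def Qpoly (n m : ℕ) : Set (Fin m × Fin n → ℝ) :=
  convexHull ℝ {x | ∃ σ : Fin n → Fin m, x = assignVec σ}

/-- `P(J,M)`: the convex hull of all points `(x^σ, T)` where `σ` is a schedule and the
natural number `T` upper-bounds every machine load; the `T`-coordinate is the `none`
coordinate of the ambient space `ℝ^(Option (M × J))`. -/
def Ppoly (n m : ℕ) (p : Fin n → ℕ) : Set (Option (Fin m × Fin n) → ℝ) :=
  convexHull ℝ {z | ∃ (σ : Fin n → Fin m) (t : ℕ), (∀ i, load p σ i ≤ t) ∧
    z = fun q => Option.elim q (t : ℝ) (fun ij => assignVec σ ij)}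

/-!
Rothvoß's lower bound for the perfect matching polytope is transferred to schedules. Consider the
matrix with a row for each odd cut `U` and a column for each perfect matching `g` of a vertex set,
whose entry is the number of edges of `g` crossing `U`, minus one.

*Schedules.* Give every vertex a machine, a unit job, and `α - 1` dummy jobs of size two; add a
filler job of size two for every second vertex, and so many spare machines that the optimal makespan
is two. Charge a job for leaving the vertex machines, a dummy job for leaving its own machine, and a
unit job for changing sides of `U`. In an `α`-approximate schedule of cost zero each vertex machine
has room for exactly two besides its dummy jobs, so by counting it holds either one filler job or
two unit jobs, of vertices on the same side of `U`. This is impossible if `U` is odd, so the cost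
minus one is a slack of the polytope. Processing both ends of each edge of `g` on the machine of one
of them costs exactly the number of edges of `g` crossing `U`. By Yannakakis' theorem, the matrix
thus has nonnegative rank at most one more than the extension complexity.

*Nonnegative rank.* Let `u U * v g` be a nonnegative rank-one summand. It vanishes wherever the
crossing number is one. Averaging over all relabellings of the vertices of a fixed template, compare
its weights on the entries with crossing numbers three and five. A core of five columns, of two
vertices each, is rotated cyclically; if the columns `1` and `3` are left out of the cut and matched
with each other, the crossing number is three, while rotating only the matching makes it one. Bits
attached to other parts of the template are exchangeable with the bits deciding whether this
happens, so by the level-one inequality for functions on the hypercube these decisions hardly affect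
the weights of `u` and of `v`, up to an exponentially small error. As at most two of five cyclically
arranged elements are pairwise nonadjacent, the weight on crossing number three is at most about two
fifths of that on crossing number five. In the whole matrix this ratio is one half, so exponentially
many summands are needed.
-/

section Hypercube

variable {ι : Type*} [Fintype ι] [DecidableEq ι]

/-- The `±1`-valued character of a bit. -/
def boolSign (b : Bool) : ℝ := if b then 1 else -1

lemma sum_exp_sum_mul_boolSign_le (c : ι → ℝ) :
    ∑ x : ι → Bool, Real.exp (∑ i, c i * boolSign (x i)) ≤
      2 ^ Fintype.card ι * Real.exp ((∑ i, c i ^ 2) / 2) :=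
  calc ∑ x : ι → Bool, Real.exp (∑ i, c i * boolSign (x i))
    _ = ∏ i, ∑ b, Real.exp (c i * boolSign b) := by
        simp_rw [Real.exp_sum, prod_univ_sum, Fintype.piFinset_univ]
    _ = ∏ i, 2 * Real.cosh (c i) := by
        simp [boolSign, Real.cosh_eq, mul_div_cancel₀]
    _ ≤ ∏ i, 2 * Real.exp (c i ^ 2 / 2) := by
        gcongr with i
        exact Real.cosh_le_exp_half_sq (c i)
    _ = _ := by
        rw [prod_mul_distrib, ← Real.exp_sum, sum_div, prod_const, card_univ]

lemma sum_boolSign_mul_eq_sub (o : ι) (f : (ι → Bool) → ℝ) :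
    ∑ x, boolSign (x o) * f x = ∑ x with x o = true, f x - ∑ x with x o = false, f x := by
  rw [sum_filter, sum_filter, ← sum_sub_distrib]
  refine sum_congr rfl fun x _ => ?_
  cases x o <;> simp [boolSign]

lemma sum_eq_sum_true_add_sum_false (o : ι) (f : (ι → Bool) → ℝ) :
    ∑ x, f x = ∑ x with x o = true, f x + ∑ x with x o = false, f x := by
  simpa using (sum_filter_add_sum_filter_not univ (fun x => x o = true) f).symm

lemma card_filter_apply_none_eq {κ : Type*} [Fintype κ] [DecidableEq κ] (c : Bool) :
    #{x : Option κ → Bool | x none = c} = 2 ^ Fintype.card κ := by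
  have hbox : ({x : Option κ → Bool | x none = c} : Finset _) =
      Fintype.piFinset fun i => i.elim {c} fun _ => univ := by
    ext x
    simp [Option.forall]
  simp [hbox, Fintype.prod_option]

lemma exists_sq_eq_one_and_abs_eq_mul (y : ℝ) : ∃ c : ℝ, c ^ 2 = 1 ∧ |y| = c * y := by
  obtain hy | hy := abs_choice y
  · exact ⟨1, by norm_num, by rw [hy, one_mul]⟩
  · exact ⟨-1, by norm_num, by rw [hy, neg_one_mul]⟩

lemma le_add_exp_mul {t : ℝ} (ht : 0 < t) (s y : ℝ) :
    y ≤ s + 1 / t * Real.exp (-(t * s)) * Real.exp (t * y) := by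
  have h := Real.add_one_le_exp (-(t * s) + t * y)
  rw [mul_assoc, ← Real.exp_add, ← sub_le_iff_le_add', one_div_mul_eq_div, le_div_iff₀ ht]
  linarith

/-- Level-one inequality: a function with small mean has small total influence. The linear form
`∑ ± xᵢ` exceeds `t n` only on an exponentially small part of the cube. -/
lemma sum_abs_sum_boolSign_mul_le (f : (ι → Bool) → ℝ) {B t : ℝ} (hf : ∀ x, 0 ≤ f x)
    (hB : ∀ x, f x ≤ B) (ht : 0 < t) :
    ∑ i, |∑ x, boolSign (x i) * f x| ≤ t * Fintype.card ι * ∑ x, f x +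
      B / t * Real.exp (-(t ^ 2 * Fintype.card ι / 2)) * 2 ^ Fintype.card ι := by
  set n := (Fintype.card ι : ℝ)
  choose c hc_sq hc using fun i =>
    exists_sq_eq_one_and_abs_eq_mul (∑ x, boolSign (x i) * f x)
  let ℓ : (ι → Bool) → ℝ := fun x => ∑ i, c i * boolSign (x i)
  have hℓ (x) : ℓ x ≤ t * n + 1 / t * Real.exp (-(t ^ 2 * n)) * Real.exp (t * ℓ x) := by
    simpa only [← mul_assoc, ← pow_two] using le_add_exp_mul ht (t * n) (ℓ x)
  have hpoint (x) : f x * ℓ x ≤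
      t * n * f x + B / t * Real.exp (-(t ^ 2 * n)) * Real.exp (t * ℓ x) := by
    calc f x * ℓ x ≤ f x * (t * n + 1 / t * Real.exp (-(t ^ 2 * n)) * Real.exp (t * ℓ x)) :=
          mul_le_mul_of_nonneg_left (hℓ x) (hf x)
      _ = t * n * f x + f x / t * Real.exp (-(t ^ 2 * n)) * Real.exp (t * ℓ x) := by ring
      _ ≤ _ := by gcongr; exact hB x
  have hexp : ∑ x, Real.exp (t * ℓ x) ≤ 2 ^ Fintype.card ι * Real.exp (t ^ 2 * n / 2) := by
    simpa only [ℓ, n, mul_assoc t, ← mul_sum, mul_pow, hc_sq, sum_const, card_univ, nsmul_eq_mul,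
      mul_one, mul_comm] using sum_exp_sum_mul_boolSign_le fun i => t * c i
  have hB0 : 0 ≤ B := (hf fun _ => false).trans (hB _)
  calc ∑ i, |∑ x, boolSign (x i) * f x| = ∑ x, f x * ℓ x := by
        simp_rw [hc, ℓ, mul_sum]
        rw [sum_comm]
        simp_rw [mul_comm (f _), mul_assoc]
    _ ≤ ∑ x, (t * n * f x + B / t * Real.exp (-(t ^ 2 * n)) * Real.exp (t * ℓ x)) :=
        sum_le_sum fun x _ => hpoint x
    _ = t * n * ∑ x, f x + B / t * Real.exp (-(t ^ 2 * n)) * ∑ x, Real.exp (t * ℓ x) := by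
        rw [sum_add_distrib, mul_sum, mul_sum]
    _ ≤ t * n * ∑ x, f x + B / t * Real.exp (-(t ^ 2 * n)) *
          (2 ^ Fintype.card ι * Real.exp (t ^ 2 * n / 2)) := by gcongr
    _ = _ := by
        have : Real.exp (-(t ^ 2 * n / 2)) =
            Real.exp (-(t ^ 2 * n)) * Real.exp (t ^ 2 * n / 2) := by
          rw [← Real.exp_add]
          ring_nf
        rw [this]
        ring

/-- The error term of the level-one inequality with threshold `t` for functions bounded by `B` on
the `n`-dimensional cube, averaged over the coordinates. -/
def influenceError (n : ℕ) (B t : ℝ) : ℝ :=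
  B / t * Real.exp (-(t ^ 2 * n / 2)) * 2 ^ n / n

variable {G : Type*} [Fintype G] [Group G]

/-- The group moves `o` to every other coordinate, so the influence of `o` is the average one. -/
lemma sum_abs_sum_boolSign_mul_le_of_swap (o : ι) (τ : ι → G) {F : G → (ι → Bool) → ℝ} {B t : ℝ}
    (hF : ∀ i p x, F (τ i * p) x = F p (x ∘ Equiv.swap o i)) (h0 : ∀ p x, 0 ≤ F p x)
    (hB : ∀ p x, F p x ≤ B) (ht : 0 < t) :
    ∑ p, |∑ x, boolSign (x o) * F p x| ≤
      t * ∑ p, ∑ x, F p x + Fintype.card G * influenceError (Fintype.card ι) B t := by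
  have : Nonempty ι := ⟨o⟩
  have hpos : (0 : ℝ) < Fintype.card ι := by exact_mod_cast Fintype.card_pos
  have hmove (i) : ∑ p, |∑ x, boolSign (x o) * F p x| = ∑ p, |∑ x, boolSign (x i) * F p x| := by
    rw [← Equiv.sum_comp (Equiv.mulLeft (τ i))]
    refine sum_congr rfl fun p _ => congrArg _ ?_
    rw [← Equiv.sum_comp ((Equiv.swap o i).arrowCongr (Equiv.refl Bool))]
    refine sum_congr rfl fun x _ => ?_
    rw [Equiv.coe_mulLeft, hF]
    congr 2
    · simp
    · ext j
      simp
  refine le_of_mul_le_mul_left ?_ hpos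
  calc Fintype.card ι * ∑ p, |∑ x, boolSign (x o) * F p x|
    _ = ∑ p, ∑ i, |∑ x, boolSign (x i) * F p x| := by
        rw [sum_comm, ← sum_congr rfl fun i _ => hmove i, sum_const, card_univ, nsmul_eq_mul]
    _ ≤ ∑ p, (t * Fintype.card ι * ∑ x, F p x + B / t *
          Real.exp (-(t ^ 2 * Fintype.card ι / 2)) * 2 ^ Fintype.card ι) :=
        sum_le_sum fun p _ => sum_abs_sum_boolSign_mul_le (F p) (h0 p) (hB p) ht
    _ = _ := by
        rw [sum_add_distrib, ← mul_sum, sum_const, card_univ, nsmul_eq_mul, influenceError]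
        field_simp

lemma sum_abs_sub_mul_le_of_swap (o : ι) (τ : ι → G) {F : G → (ι → Bool) → ℝ} {w : G → ℝ}
    {B t : ℝ} (hF : ∀ i p x, F (τ i * p) x = F p (x ∘ Equiv.swap o i))
    (hw : ∀ i p, w (τ i * p) = w p) (hF0 : ∀ p x, 0 ≤ F p x) (hw0 : ∀ p, 0 ≤ w p)
    (hB : ∀ p x, F p x * w p ≤ B) (ht : 0 < t) :
    ∑ p, |∑ x with x o = true, F p x - ∑ x with x o = false, F p x| * w p ≤
      t * ∑ p, ((∑ x with x o = true, F p x) + ∑ x with x o = false, F p x) * w p +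
        Fintype.card G * influenceError (Fintype.card ι) B t := by
  have h := sum_abs_sum_boolSign_mul_le_of_swap (F := fun p x => F p x * w p) o τ
    (fun i p x => by rw [hF, hw]) (fun p x => mul_nonneg (hF0 p x) (hw0 p)) hB ht
  simp_rw [← mul_assoc, ← sum_mul, sum_boolSign_mul_eq_sub, abs_mul, abs_of_nonneg (hw0 _)] at h
  simp_rw [← sum_eq_sum_true_add_sum_false]
  exact h

end Hypercube

section Orbit

lemma two_mul_card_le_of_injective {A : Type*} [Fintype A] {π : A → A} (hπ : Function.Injective π)
    {s : Finset A} (hs : ∀ k ∈ s, π k ∉ s) : 2 * #s ≤ Fintype.card A := by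
  classical
  have hdisj : Disjoint s (s.image π) := by
    simpa [disjoint_right] using hs
  calc 2 * #s = #(s ∪ s.image π) := by
        rw [card_union_of_disjoint hdisj, card_image_of_injective s hπ, two_mul]
    _ ≤ Fintype.card A := card_le_univ _

variable {G : Type*} [Group G]

lemma sum_orbit_le {ρ : G} {n : ℕ} [NeZero n] (hρ : ρ ^ n = 1) {w c e : G → ℝ}
    (hw : ∀ p, w p = 0 ∨ w (ρ * p) = 0) (hc : ∀ p, c (ρ * p) = c p) (hc0 : ∀ p, 0 ≤ c p)
    (he0 : ∀ p, 0 ≤ e p) (hwce : ∀ p, w p ≤ c p + e p) (p : G) :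
    ∑ k : Fin n, w (ρ ^ (k : ℕ) * p) ≤ (n / 2 : ℕ) * c p + ∑ k : Fin n, e (ρ ^ (k : ℕ) * p) := by
  set s : Finset (Fin n) := {k | w (ρ ^ (k : ℕ) * p) ≠ 0}
  have hpow (k : Fin n) : ρ ^ ((k + 1 : Fin n) : ℕ) = ρ * ρ ^ (k : ℕ) := by
    rw [Fin.val_add, ← pow_eq_pow_mod _ hρ, Fin.val_one', pow_add, ← pow_eq_pow_mod _ hρ, pow_one,
      pow_mul_comm']
  have hs : #s ≤ n / 2 := by
    have hsucc : ∀ k ∈ s, k + 1 ∉ s := by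
      intro k hk hk'
      rw [mem_filter_univ] at hk hk'
      rw [hpow, mul_assoc] at hk'
      exact (hw _).elim hk hk'
    have := two_mul_card_le_of_injective (add_left_injective 1) hsucc
    rw [Fintype.card_fin] at this
    lia
  have hcp (k : ℕ) : c (ρ ^ k * p) = c p := by
    induction k with
    | zero => rw [pow_zero, one_mul]
    | succ k ih => rw [pow_succ', mul_assoc, hc, ih]
  calc ∑ k : Fin n, w (ρ ^ (k : ℕ) * p) = ∑ k ∈ s, w (ρ ^ (k : ℕ) * p) :=
        (sum_filter_ne_zero _).symm
    _ ≤ ∑ k ∈ s, (c p + e (ρ ^ (k : ℕ) * p)) :=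
        sum_le_sum fun k _ => (hwce _).trans_eq (by rw [hcp])
    _ = #s * c p + ∑ k ∈ s, e (ρ ^ (k : ℕ) * p) := by
        rw [sum_add_distrib, sum_const, nsmul_eq_mul]
    _ ≤ _ := by
        gcongr
        · exact hc0 p
        · exact fun k _ _ => he0 _
        · exact subset_univ s

/-- An independent set of the `n`-cycle has at most `n / 2` points. -/
lemma mul_sum_le_of_pow_eq_one [Fintype G] {ρ : G} {n : ℕ} [NeZero n] (hρ : ρ ^ n = 1)
    {w c e : G → ℝ} (hw : ∀ p, w p = 0 ∨ w (ρ * p) = 0) (hc : ∀ p, c (ρ * p) = c p)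
    (hc0 : ∀ p, 0 ≤ c p) (he0 : ∀ p, 0 ≤ e p) (hwce : ∀ p, w p ≤ c p + e p) :
    n * ∑ p, w p ≤ (n / 2 : ℕ) * ∑ p, c p + n * ∑ p, e p := by
  have hshift (f : G → ℝ) : n * ∑ p, f p = ∑ p, ∑ k : Fin n, f (ρ ^ (k : ℕ) * p) := by
    have htranslate (k : ℕ) : ∑ p, f (ρ ^ k * p) = ∑ p, f p :=
      Equiv.sum_comp (Equiv.mulLeft (ρ ^ k)) f
    rw [sum_comm]
    simp [htranslate]
  rw [hshift, hshift, mul_sum, ← sum_add_distrib]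
  exact sum_le_sum fun p _ => sum_orbit_le hρ hw hc hc0 he0 hwce p

lemma mul_le_mul_add_of_nonneg {u v a b : ℝ} (hu : 0 ≤ u) (hv : 0 ≤ v) (ha : 0 ≤ a) (hb : 0 ≤ b) :
    u * v ≤ a * b + (|b - v| * u + 2 * (|a - u| * v)) := by
  obtain hbv | hvb := le_total b (2 * v)
  · nlinarith [neg_le_abs (b - v), neg_le_abs (a - u), abs_nonneg (a - u)]
  · nlinarith [le_abs_self (b - v), mul_nonneg (abs_nonneg (a - u)) hv, mul_nonneg ha hb]

/-- By `huv`, the support of `u * v` is independent in each orbit of `ρ`, a `5`-cycle. -/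
lemma five_mul_sum_mul_le [Fintype G] {ρ : G} (hρ : ρ ^ 5 = 1) {u v a b : G → ℝ}
    (hu : ∀ p, 0 ≤ u p) (hv : ∀ p, 0 ≤ v p) (ha : ∀ p, 0 ≤ a p) (hb : ∀ p, 0 ≤ b p)
    (haρ : ∀ p, a (ρ * p) = a p) (hbρ : ∀ p, b (ρ * p) = b p)
    (huv : ∀ p, u p * v (ρ * p) = 0) :
    5 * ∑ p, u p * v p ≤ 2 * ∑ p, a p * b p +
      5 * (∑ p, |b p - v p| * u p + 2 * ∑ p, |a p - u p| * v p) := by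
  have hw (p) : u p * v p = 0 ∨ u (ρ * p) * v (ρ * p) = 0 :=
    (mul_eq_zero.1 (huv p)).imp (mul_eq_zero_of_left · _) (mul_eq_zero_of_right _ ·)
  have h := mul_sum_le_of_pow_eq_one hρ hw (c := fun p => a p * b p)
    (e := fun p => |b p - v p| * u p + 2 * (|a p - u p| * v p))
    (fun p => by rw [haρ, hbρ]) (fun p => mul_nonneg (ha p) (hb p))
    (fun p => by have := hu p; have := hv p; positivity)
    fun p => mul_le_mul_add_of_nonneg (hu p) (hv p) (ha p) (hb p)
  simpa [sum_add_distrib, mul_sum] using h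

end Orbit

section CutsAndMatchings

variable {V : Type*}

lemma conj_eq_of_apply_eq {p g h : Equiv.Perm V} (hgh : ∀ v, g (p v) = p (h v)) :
    p⁻¹ * g * p = h := by
  rw [mul_assoc, inv_mul_eq_iff_eq_mul]
  exact Equiv.ext hgh

lemma perm_conj_mul (p q g : Equiv.Perm V) : (q * p)⁻¹ * g * (q * p) = p⁻¹ * (q⁻¹ * g * q) * p := by
  simp only [mul_inv_rev, mul_assoc]

/-- A perfect matching of `V`, encoded as the permutation exchanging the ends of each edge. -/
structure IsPerfectMatching (g : Equiv.Perm V) : Prop where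
  involutive : Function.Involutive g
  apply_ne : ∀ v, g v ≠ v

lemma IsPerfectMatching.conj {g : Equiv.Perm V} (hg : IsPerfectMatching g) (p : Equiv.Perm V) :
    IsPerfectMatching (p⁻¹ * g * p) where
  involutive v := by simp [hg.involutive (p v)]
  apply_ne v h := hg.apply_ne (p v) (Equiv.Perm.inv_eq_iff_eq.1 h)

variable [Fintype V]

/-- The number of edges of the matching `g` crossing the cut `U`. -/
def crossCount (U : V → Bool) (g : Equiv.Perm V) : ℕ := #{v | U v ∧ ¬ U (g v)}

/-- A cut with an odd number of vertices on its `true` side. -/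
def OddCut (U : V → Bool) : Prop := Odd #{v | U v}

lemma OddCut.comp_perm {U : V → Bool} (hU : OddCut U) (p : Equiv.Perm V) : OddCut (U ∘ p) := by
  have : #{v | (U ∘ p) v} = #{v | U v} := card_equiv p (by simp)
  rwa [OddCut, this]

lemma crossCount_comp_conj (U : V → Bool) (g p : Equiv.Perm V) :
    crossCount (U ∘ p) (p⁻¹ * g * p) = crossCount U g :=
  card_equiv p (by simp)

lemma crossCount_le_card (U : V → Bool) (g : Equiv.Perm V) : crossCount U g ≤ Fintype.card V :=
  card_le_univ _

end CutsAndMatchings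

section Template

variable {κ : Type*}

/-- The columns of the template: a core `5`-cycle, one column for each coordinate of a cut, and a
pair of columns for each coordinate of a matching. -/
abbrev Column (κ : Type*) := Fin 5 ⊕ κ ⊕ κ × Bool

/-- The vertices of the template: each column has two vertices. -/
abbrev Vertex (κ : Type*) := Column κ × Bool

/-- The template cuts. Bit `none` decides whether the core columns `1` and `3` are cut like the
other core columns or lie outside the cut, and bit `some i` the side of the column `i`. -/
def templateCut (x : Option κ → Bool) : Vertex κ → Bool
  | (.inl k, b) => if k = 1 ∨ k = 3 then x none && !b else !b
  | (.inr (.inl i), _) => x (some i)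
  | (.inr (.inr _), _) => false

/-- The map underlying `templateMatching`. -/
def templateMate (z : Option κ → Bool) : Vertex κ → Vertex κ
  | (.inl k, b) => if (k = 1 ∨ k = 3) ∧ z none = false then (.inl k.rev, b) else (.inl k, !b)
  | (.inr (.inl i), b) => (.inr (.inl i), !b)
  | (.inr (.inr (i, c)), b) =>
    if z (some i) then (.inr (.inr (i, c)), !b) else (.inr (.inr (i, !c)), b)

lemma templateMate_involutive (z : Option κ → Bool) : Function.Involutive (templateMate z) := by
  rintro ⟨k | i | ⟨i, c⟩, b⟩
  · fin_cases k <;> cases hz : z none <;> simp [templateMate, hz]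
  · simp [templateMate]
  · cases hz : z (some i) <;> simp [templateMate, hz]

/-- The template matchings. A column is matched internally, except that the core columns `1` and
`3` are matched with each other when bit `none` is `false`, and the two columns of the pair `i`
when bit `some i` is `false`. -/
def templateMatching (z : Option κ → Bool) : Equiv.Perm (Vertex κ) :=
  (templateMate_involutive z).toPerm

lemma templateMatching_isPerfectMatching (z : Option κ → Bool) :
    IsPerfectMatching (templateMatching z) where
  involutive := templateMate_involutive z
  apply_ne := by
    rintro ⟨k | i | ⟨i, c⟩, b⟩
    · fin_cases k <;> cases hz : z none <;> simp [templateMatching, templateMate, hz]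
    · simp [templateMatching, templateMate]
    · cases hz : z (some i) <;> simp [templateMatching, templateMate, hz]

lemma templateCut_oddCut [Fintype κ] (x : Option κ → Bool) : OddCut (templateCut x) := by
  rw [OddCut, card_filter]
  simp only [Fintype.sum_prod_type, Fintype.sum_sum_type, Fin.sum_univ_five, Fintype.sum_bool,
    templateCut, sum_add_distrib]
  cases x none <;> simp +decide [Nat.odd_add, Nat.even_add] <;> rfl

lemma crossCount_template [Fintype κ] (x z : Option κ → Bool) :
    crossCount (templateCut x) (templateMatching z) = 3 + if x none && z none then 2 else 0 := by
  rw [crossCount, card_filter]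
  simp only [Fintype.sum_prod_type, Fintype.sum_sum_type, Fin.sum_univ_five, Fintype.sum_bool,
    templateMatching, Function.Involutive.coe_toPerm, templateMate]
  cases hx : x none <;> cases z none <;> simp [templateCut, hx]

/-- Rotates the core `5`-cycle. -/
def coreRotation (κ : Type*) : Equiv.Perm (Vertex κ) :=
  (Equiv.sumCongr (Equiv.addRight 1) (Equiv.refl _)).prodCongr (Equiv.refl _)

lemma coreRotation_pow_five : coreRotation κ ^ 5 = 1 := by
  ext1 ⟨k | j, b⟩
  · fin_cases k <;> rfl
  · rfl

lemma templateCut_comp_coreRotation {x : Option κ → Bool} (hx : x none = true) :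
    templateCut x ∘ coreRotation κ = templateCut x := by
  ext1 ⟨k | i | j, b⟩ <;> simp [coreRotation, templateCut, hx]

lemma conj_coreRotation_templateMatching {z : Option κ → Bool} (hz : z none = true) :
    (coreRotation κ)⁻¹ * templateMatching z * coreRotation κ = templateMatching z := by
  refine conj_eq_of_apply_eq ?_
  rintro ⟨k | i | ⟨i, c⟩, b⟩
  · simp [coreRotation, templateMatching, templateMate, hz]
  · simp [coreRotation, templateMatching, templateMate]
  · cases h : z (some i) <;> simp [coreRotation, templateMatching, templateMate, h]

/-- The rotated matching crosses the cut only inside the core column `4`. -/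
lemma crossCount_conj_coreRotation [Fintype κ] {x z : Option κ → Bool} (hx : x none = false)
    (hz : z none = false) :
    crossCount (templateCut x) ((coreRotation κ)⁻¹ * templateMatching z * coreRotation κ) = 1 := by
  rw [crossCount, card_eq_one]
  refine ⟨(.inl 4, false), ?_⟩
  ext ⟨k | i | ⟨i, c⟩, b⟩
  · fin_cases k <;> cases b <;>
      simp [coreRotation, templateMatching, templateMate, templateCut, hx, hz,
        show (3 : Fin 5) + -1 = 2 from rfl]
  · simp [coreRotation, templateMatching, templateMate, templateCut]
  · simp [templateCut]

variable [DecidableEq κ]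

/-- For `i = some j`, exchanges the `false` vertices of the core columns `1` and `3` with the two
vertices of the column `j`. -/
def cutSwap : Option κ → Equiv.Perm (Vertex κ)
  | none => 1
  | some j => Equiv.swap (Sum.inl 1, false) (Sum.inr (Sum.inl j), false) *
      Equiv.swap (Sum.inl 3, false) (Sum.inr (Sum.inl j), true)

/-- For `i = some j`, exchanges the core columns `1` and `3` with the two columns of the
pair `j`. -/
def matchingSwap : Option κ → Equiv.Perm (Vertex κ)
  | none => 1
  | some j => Equiv.prodCongr (Equiv.swap (Sum.inl 1) (Sum.inr (Sum.inr (j, false))) *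
      Equiv.swap (Sum.inl 3) (Sum.inr (Sum.inr (j, true)))) (Equiv.refl _)

lemma templateCut_comp_cutSwap (x : Option κ → Bool) (i : Option κ) :
    templateCut x ∘ cutSwap i = templateCut (x ∘ Equiv.swap none i) := by
  obtain _ | j := i
  · simp [cutSwap]
  ext1 ⟨k | l | ⟨l, c⟩, b⟩
  · fin_cases k <;> cases b <;> simp [cutSwap, templateCut, Equiv.swap_apply_def]
  · obtain rfl | hl := eq_or_ne l j <;> cases b <;>
      simp [cutSwap, templateCut, Equiv.swap_apply_def, *]
  · simp [cutSwap, templateCut, Equiv.swap_apply_def]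

lemma conj_cutSwap_templateMatching {z : Option κ → Bool} (hz : z none = false) (i : Option κ) :
    (cutSwap i)⁻¹ * templateMatching z * cutSwap i = templateMatching z := by
  refine conj_eq_of_apply_eq ?_
  obtain _ | j := i
  · simp [cutSwap]
  rintro ⟨k | l | ⟨l, c⟩, b⟩
  · fin_cases k <;> cases b <;>
      simp [cutSwap, templateMatching, templateMate, hz, Equiv.swap_apply_def]
  · obtain rfl | hl := eq_or_ne l j <;> cases b <;>
      simp [cutSwap, templateMatching, templateMate, Equiv.swap_apply_def, *]
  · cases h : z (some l) <;>
      simp [cutSwap, templateMatching, templateMate, Equiv.swap_apply_def, h]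

lemma templateCut_comp_matchingSwap {x : Option κ → Bool} (hx : x none = false) (i : Option κ) :
    templateCut x ∘ matchingSwap i = templateCut x := by
  obtain _ | j := i
  · simp [matchingSwap]
  ext1 ⟨k | l | ⟨l, c⟩, b⟩
  · fin_cases k <;> simp [matchingSwap, templateCut, hx, Equiv.swap_apply_def]
  · simp [matchingSwap, templateCut, Equiv.swap_apply_def]
  · obtain rfl | hl := eq_or_ne l j <;> cases c <;>
      simp [matchingSwap, templateCut, Equiv.swap_apply_def, *]

lemma conj_matchingSwap_templateMatching (z : Option κ → Bool) (i : Option κ) :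
    (matchingSwap i)⁻¹ * templateMatching z * matchingSwap i =
      templateMatching (z ∘ Equiv.swap none i) := by
  refine conj_eq_of_apply_eq ?_
  obtain _ | j := i
  · simp [matchingSwap]
  rintro ⟨k | l | ⟨l, c⟩, b⟩
  · fin_cases k <;> cases hj : z (some j) <;>
      simp [matchingSwap, templateMatching, templateMate, Equiv.swap_apply_def, hj]
  · simp [matchingSwap, templateMatching, templateMate, Equiv.swap_apply_def]
  · obtain rfl | hl := eq_or_ne l j
    · cases c <;> cases hz : z none <;>
        simp [matchingSwap, templateMatching, templateMate, Equiv.swap_apply_def, hz]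
    · cases h : z (some l) <;>
        simp [matchingSwap, templateMatching, templateMate, Equiv.swap_apply_def, hl, h]

end Template

section RankBound

variable {κ : Type*} [Fintype κ] [DecidableEq κ]

/-- The weight under `u` of the template cuts with bit `none` equal to `c`, transported by `p`. -/
def cutSum (u : (Vertex κ → Bool) → ℝ) (c : Bool) (p : Equiv.Perm (Vertex κ)) : ℝ :=
  ∑ x with x none = c, u (templateCut x ∘ p)

/-- The weight under `v` of the template matchings with bit `none` equal to `c`, transported
by `p`. -/
def matchSum (v : Equiv.Perm (Vertex κ) → ℝ) (c : Bool) (p : Equiv.Perm (Vertex κ)) : ℝ :=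
  ∑ z with z none = c, v (p⁻¹ * templateMatching z * p)

variable {u : (Vertex κ → Bool) → ℝ} {v : Equiv.Perm (Vertex κ) → ℝ}

lemma cutSum_mul_matchSum (c d : Bool) (p q : Equiv.Perm (Vertex κ)) :
    cutSum u c p * matchSum v d q = ∑ x with x none = c, ∑ z with z none = d,
      u (templateCut x ∘ p) * v (q⁻¹ * templateMatching z * q) :=
  sum_mul_sum _ _ _ _

lemma cutSum_nonneg (hu : ∀ U, OddCut U → 0 ≤ u U) (c : Bool) (p : Equiv.Perm (Vertex κ)) :
    0 ≤ cutSum u c p :=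
  sum_nonneg fun x _ => hu _ ((templateCut_oddCut x).comp_perm p)

lemma matchSum_nonneg (hv : ∀ g, IsPerfectMatching g → 0 ≤ v g) (c : Bool)
    (p : Equiv.Perm (Vertex κ)) : 0 ≤ matchSum v c p :=
  sum_nonneg fun z _ => hv _ ((templateMatching_isPerfectMatching z).conj p)

lemma matchSum_cutSwap_mul (i : Option κ) (p : Equiv.Perm (Vertex κ)) :
    matchSum v false (cutSwap i * p) = matchSum v false p :=
  sum_congr rfl fun z hz => by
    rw [perm_conj_mul, conj_cutSwap_templateMatching (mem_filter_univ z |>.1 hz)]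

lemma cutSum_matchingSwap_mul (i : Option κ) (p : Equiv.Perm (Vertex κ)) :
    cutSum u false (matchingSwap i * p) = cutSum u false p :=
  sum_congr rfl fun x hx => by
    rw [Equiv.Perm.coe_mul, ← Function.comp_assoc,
      templateCut_comp_matchingSwap (mem_filter_univ x |>.1 hx)]

lemma cutSum_coreRotation_mul (p : Equiv.Perm (Vertex κ)) :
    cutSum u true (coreRotation κ * p) = cutSum u true p :=
  sum_congr rfl fun x hx => by
    rw [Equiv.Perm.coe_mul, ← Function.comp_assoc,
      templateCut_comp_coreRotation (mem_filter_univ x |>.1 hx)]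

lemma matchSum_coreRotation_mul (p : Equiv.Perm (Vertex κ)) :
    matchSum v true (coreRotation κ * p) = matchSum v true p :=
  sum_congr rfl fun z hz => by
    rw [perm_conj_mul, conj_coreRotation_templateMatching (mem_filter_univ z |>.1 hz)]

lemma cutSum_mul_matchSum_coreRotation_mul
    (h0 : ∀ U g, OddCut U → IsPerfectMatching g → crossCount U g = 1 → u U * v g = 0)
    (p : Equiv.Perm (Vertex κ)) :
    cutSum u false p * matchSum v false (coreRotation κ * p) = 0 := by
  rw [cutSum_mul_matchSum]
  refine sum_eq_zero fun x hx => sum_eq_zero fun z hz => ?_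
  rw [mem_filter_univ] at hx hz
  refine h0 _ _ ((templateCut_oddCut x).comp_perm p)
    ((templateMatching_isPerfectMatching z).conj _) ?_
  rw [perm_conj_mul, crossCount_comp_conj, crossCount_conj_coreRotation hx hz]

lemma sum_abs_cutSum_sub_mul_matchSum_le (hu : ∀ U, OddCut U → 0 ≤ u U)
    (hv : ∀ g, IsPerfectMatching g → 0 ≤ v g) {B t : ℝ}
    (hB : ∀ U g, OddCut U → IsPerfectMatching g → u U * v g ≤ B) (ht : 0 < t) :
    ∑ p, |cutSum u true p - cutSum u false p| * matchSum v false p ≤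
      t * ∑ p, (cutSum u true p + cutSum u false p) * matchSum v false p +
        Fintype.card (Equiv.Perm (Vertex κ)) *
          influenceError (Fintype.card κ + 1) (2 ^ Fintype.card κ * B) t := by
  rw [← Fintype.card_option]
  refine sum_abs_sub_mul_le_of_swap none cutSwap (fun i p x => ?_) matchSum_cutSwap_mul
    (fun p x => hu _ ((templateCut_oddCut x).comp_perm p)) (matchSum_nonneg hv false)
    (fun p x => ?_) ht
  · rw [Equiv.Perm.coe_mul, ← Function.comp_assoc, templateCut_comp_cutSwap]
  · rw [matchSum, mul_sum]
    simpa [card_filter_apply_none_eq] using sum_le_card_nsmul {z : Option κ → Bool | z none = false}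
      (fun z => u (templateCut x ∘ p) * v (p⁻¹ * templateMatching z * p)) B fun z _ =>
      hB _ _ ((templateCut_oddCut x).comp_perm p) ((templateMatching_isPerfectMatching z).conj p)

lemma sum_abs_matchSum_sub_mul_cutSum_le (hu : ∀ U, OddCut U → 0 ≤ u U)
    (hv : ∀ g, IsPerfectMatching g → 0 ≤ v g) {B t : ℝ}
    (hB : ∀ U g, OddCut U → IsPerfectMatching g → u U * v g ≤ B) (ht : 0 < t) :
    ∑ p, |matchSum v true p - matchSum v false p| * cutSum u false p ≤
      t * ∑ p, (matchSum v true p + matchSum v false p) * cutSum u false p +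
        Fintype.card (Equiv.Perm (Vertex κ)) *
          influenceError (Fintype.card κ + 1) (2 ^ Fintype.card κ * B) t := by
  rw [← Fintype.card_option]
  refine sum_abs_sub_mul_le_of_swap none matchingSwap (fun i p z => ?_) cutSum_matchingSwap_mul
    (fun p z => hv _ ((templateMatching_isPerfectMatching z).conj p)) (cutSum_nonneg hu false)
    (fun p z => ?_) ht
  · rw [perm_conj_mul, conj_matchingSwap_templateMatching]
  · rw [cutSum, mul_comm, sum_mul]
    simpa [card_filter_apply_none_eq] using sum_le_card_nsmul {x : Option κ → Bool | x none = false}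
      (fun x => u (templateCut x ∘ p) * v (p⁻¹ * templateMatching z * p)) B fun x _ =>
      hB _ _ ((templateCut_oddCut x).comp_perm p) ((templateMatching_isPerfectMatching z).conj p)

/-- The sums with two bits `true` collect entries with crossing number `5`, all others entries with
crossing number `3`. -/
lemma five_mul_sum_cutSum_mul_matchSum_le (hu : ∀ U, OddCut U → 0 ≤ u U)
    (hv : ∀ g, IsPerfectMatching g → 0 ≤ v g) {B t : ℝ}
    (hB : ∀ U g, OddCut U → IsPerfectMatching g → u U * v g ≤ B) (ht : 0 < t)
    (h0 : ∀ U g, OddCut U → IsPerfectMatching g → crossCount U g = 1 → u U * v g = 0) :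
    5 * ∑ p, cutSum u false p * matchSum v false p ≤
      2 * ∑ p, cutSum u true p * matchSum v true p +
      5 * (t * (3 * ∑ p, cutSum u false p * matchSum v false p +
          ∑ p, cutSum u false p * matchSum v true p +
          2 * ∑ p, cutSum u true p * matchSum v false p) +
        3 * (Fintype.card (Equiv.Perm (Vertex κ)) *
          influenceError (Fintype.card κ + 1) (2 ^ Fintype.card κ * B) t)) := by
  have hcut := sum_abs_cutSum_sub_mul_matchSum_le hu hv hB ht
  have hmatch := sum_abs_matchSum_sub_mul_cutSum_le hu hv hB ht
  simp only [add_mul, sum_add_distrib, mul_comm (matchSum _ _ _) (cutSum _ _ _)] at hcut hmatch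
  linarith [five_mul_sum_mul_le coreRotation_pow_five (cutSum_nonneg hu false)
    (matchSum_nonneg hv false) (cutSum_nonneg hu true) (matchSum_nonneg hv true)
    cutSum_coreRotation_mul matchSum_coreRotation_mul (cutSum_mul_matchSum_coreRotation_mul h0)]

variable {R : Type*} [Fintype R] {u : R → (Vertex κ → Bool) → ℝ}
  {v : R → Equiv.Perm (Vertex κ) → ℝ}

lemma sum_cutSum_mul_matchSum
    (h : ∀ U g, OddCut U → IsPerfectMatching g → ∑ i, u i U * v i g = crossCount U g - 1)
    (c d : Bool) : ∑ i, ∑ p, cutSum (u i) c p * matchSum (v i) d p =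
      Fintype.card (Equiv.Perm (Vertex κ)) *
        ((2 ^ Fintype.card κ) ^ 2 * if c && d then 4 else 2) := by
  have hp (p : Equiv.Perm (Vertex κ)) : ∑ i, cutSum (u i) c p * matchSum (v i) d p =
      (2 ^ Fintype.card κ) ^ 2 * if c && d then 4 else 2 := by
    have hentry (x z : Option κ → Bool) (hx : x none = c) (hz : z none = d) :
        ∑ i, u i (templateCut x ∘ p) * v i (p⁻¹ * templateMatching z * p) =
          if c && d then 4 else 2 := by
      rw [h _ _ ((templateCut_oddCut x).comp_perm p)
        ((templateMatching_isPerfectMatching z).conj p), crossCount_comp_conj, crossCount_template,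
        hx, hz]
      split_ifs <;> norm_num
    calc ∑ i, cutSum (u i) c p * matchSum (v i) d p
      _ = ∑ x : Option κ → Bool with x none = c, ∑ z : Option κ → Bool with z none = d,
            ∑ i, u i (templateCut x ∘ p) * v i (p⁻¹ * templateMatching z * p) := by
          simp only [cutSum_mul_matchSum]
          rw [sum_comm]
          exact sum_congr rfl fun x _ => sum_comm
      _ = ∑ x : Option κ → Bool with x none = c, ∑ z : Option κ → Bool with z none = d,
            if c && d then 4 else 2 :=
          sum_congr rfl fun x hx => sum_congr rfl fun z hz =>
            hentry x z (mem_filter_univ x |>.1 hx) (mem_filter_univ z |>.1 hz)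
      _ = _ := by
          simp only [sum_const, card_filter_apply_none_eq, nsmul_eq_mul, Nat.cast_pow,
            Nat.cast_ofNat]
          ring
  rw [sum_comm, sum_congr rfl fun p _ => hp p, sum_const, card_univ, nsmul_eq_mul]

omit [DecidableEq κ] in
lemma mul_le_crossCount_sub_one (hu : ∀ i U, OddCut U → 0 ≤ u i U)
    (hv : ∀ i g, IsPerfectMatching g → 0 ≤ v i g)
    (h : ∀ U g, OddCut U → IsPerfectMatching g → ∑ i, u i U * v i g = crossCount U g - 1)
    (i : R) {U : Vertex κ → Bool} {g : Equiv.Perm (Vertex κ)} (hU : OddCut U)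
    (hg : IsPerfectMatching g) : u i U * v i g ≤ crossCount U g - 1 :=
  (single_le_sum (f := fun i => u i U * v i g)
    (fun i _ => mul_nonneg (hu i U hU) (hv i g hg)) (mem_univ i)).trans_eq (h U g hU hg)

lemma influenceError_one_div_sixty (n : ℕ) :
    influenceError (n + 1) (2 ^ n * (10 * (n + 1))) (1 / 60) =
      1200 * (2 ^ n) ^ 2 * (Real.exp ((n + 1) / 7200))⁻¹ := by
  have hexponent : -((1 / 60 : ℝ) ^ 2 * (n + 1 : ℕ) / 2) = -((n + 1) / 7200) := by
    push_cast
    ring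
  rw [influenceError, hexponent, Real.exp_neg]
  field_simp
  push_cast
  ring

omit [DecidableEq κ] in
theorem exp_le_of_crossCount_factorization (hu : ∀ i U, OddCut U → 0 ≤ u i U)
    (hv : ∀ i g, IsPerfectMatching g → 0 ≤ v i g)
    (h : ∀ U g, OddCut U → IsPerfectMatching g → ∑ i, u i U * v i g = crossCount U g - 1) :
    Real.exp ((Fintype.card κ + 1) / 7200) ≤ 18000 * Fintype.card R := by
  classical
  have h0 (i U g) (hU : OddCut U) (hg : IsPerfectMatching g) (hUg : crossCount U g = 1) :
      u i U * v i g = 0 :=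
    le_antisymm (by simpa [hUg] using mul_le_crossCount_sub_one hu hv h i hU hg)
      (mul_nonneg (hu i U hU) (hv i g hg))
  have hB (i U g) (hU : OddCut U) (hg : IsPerfectMatching g) :
      u i U * v i g ≤ 10 * (Fintype.card κ + 1) := by
    have hcross : (crossCount U g : ℝ) ≤ Fintype.card (Vertex κ) :=
      mod_cast crossCount_le_card U g
    simp only [Fintype.card_prod, Fintype.card_sum, Fintype.card_fin, Fintype.card_bool,
      Nat.cast_mul, Nat.cast_add, Nat.cast_ofNat] at hcross
    linarith [mul_le_crossCount_sub_one hu hv h i hU hg, (Fintype.card κ).cast_nonneg (α := ℝ)]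
  have hsum := sum_le_sum fun i (_ : i ∈ univ) => five_mul_sum_cutSum_mul_matchSum_le (hu i) (hv i)
    (hB i) (show (0 : ℝ) < 1 / 60 by norm_num) (h0 i)
  simp only [sum_add_distrib, ← mul_sum, sum_cutSum_mul_matchSum h, sum_const, card_univ,
    nsmul_eq_mul, Bool.and_true, Bool.and_false, Bool.false_eq_true, if_true, if_false,
    influenceError_one_div_sixty] at hsum
  set N := (Fintype.card (Equiv.Perm (Vertex κ)) : ℝ)
  set K : ℝ := 2 ^ Fintype.card κ
  have hNK : 0 < N * K ^ 2 := by positivity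
  rw [← one_le_div (Real.exp_pos _), div_eq_mul_inv]
  exact le_of_mul_le_mul_left (by linarith) hNK

end RankBound

section Farkas

lemma sum_insert_update_smul {R M ι : Type*} [Semiring R] [AddCommMonoid M] [Module R M]
    [DecidableEq ι] {s : Finset ι} {j : ι} (hj : j ∉ s) (a : ι → M) (c : ι → R) (d : R) :
    ∑ i ∈ insert j s, Function.update c j d i • a i = d • a j + ∑ i ∈ s, c i • a i := by
  rw [sum_insert hj, Function.update_self]
  exact congrArg _ (sum_congr rfl fun i hi => by
    rw [Function.update_of_ne (ne_of_mem_of_not_mem hi hj)])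

variable {𝕜 E ι : Type*} [Field 𝕜] [LinearOrder 𝕜] [IsStrictOrderedRing 𝕜] [AddCommGroup E]
  [Module 𝕜 E]

omit [IsStrictOrderedRing 𝕜] in
/-- The functional `b` is eliminated by projecting along `z` onto its kernel. -/
lemma add_smul_nonneg_of_apply_eq_neg_one {s : Finset ι} {a : ι → E →ₗ[𝕜] 𝕜} {f b : E →ₗ[𝕜] 𝕜}
    (h : ∀ y, 0 ≤ b y → (∀ i ∈ s, 0 ≤ a i y) → 0 ≤ f y) {z : E} (hz : b z = -1) {y : E}
    (hy : ∀ i ∈ s, 0 ≤ (a i + a i z • b) y) : 0 ≤ (f + f z • b) y := by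
  have := h (y + b y • z) (by simp [hz]) fun i hi => by simpa [mul_comm] using hy i hi
  simpa [mul_comm] using this

lemma exists_nonneg_eq_sum_smul (s : Finset ι) {a : ι → E →ₗ[𝕜] 𝕜} {f : E →ₗ[𝕜] 𝕜}
    (h : ∀ y, (∀ i ∈ s, 0 ≤ a i y) → 0 ≤ f y) :
    ∃ c : ι → 𝕜, (∀ i, 0 ≤ c i) ∧ f = ∑ i ∈ s, c i • a i := by
  classical
  induction s using Finset.induction generalizing a f with
  | empty =>
    refine ⟨0, fun _ => le_rfl, LinearMap.ext fun y => ?_⟩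
    have hneg := h (-y) (by simp)
    rw [map_neg, neg_nonneg] at hneg
    simpa using le_antisymm hneg (h y (by simp))
  | insert j s hj ih =>
    have hnonneg {c : ι → 𝕜} (hc : ∀ i, 0 ≤ c i) {d : 𝕜} (hd : 0 ≤ d) (i : ι) :
        0 ≤ Function.update c j d i := by
      obtain rfl | hij := eq_or_ne i j <;> simp [*]
    simp only [forall_mem_insert, and_imp] at h
    by_cases hs : ∀ y, (∀ i ∈ s, 0 ≤ a i y) → 0 ≤ f y
    · obtain ⟨c, hc, rfl⟩ := ih hs
      exact ⟨Function.update c j 0, hnonneg hc le_rfl, by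
        rw [sum_insert_update_smul hj, zero_smul, zero_add]⟩
    push Not at hs
    obtain ⟨y, hy, hfy⟩ := hs
    have hjy : a j y < 0 := not_le.1 fun hjy => hfy.not_ge (h y hjy hy)
    have hpos : 0 < (-a j y)⁻¹ := inv_pos.2 (neg_pos.2 hjy)
    set z := (-a j y)⁻¹ • y
    have hz : a j z = -1 := by simp [z, inv_neg, hjy.ne]
    have hfz : f z ≤ 0 := by simpa [z] using mul_nonpos_of_nonneg_of_nonpos hpos.le hfy.le
    have haz (i) (hi : i ∈ s) : 0 ≤ a i z := by simpa [z] using mul_nonneg hpos.le (hy i hi)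
    obtain ⟨c, hc, hf⟩ := ih fun x => add_smul_nonneg_of_apply_eq_neg_one h hz
    have hd : 0 ≤ ∑ i ∈ s, c i * a i z - f z :=
      sub_nonneg.2 (hfz.trans (sum_nonneg fun i hi => mul_nonneg (hc i) (haz i hi)))
    refine ⟨Function.update c j _, hnonneg hc hd, ?_⟩
    rw [sum_insert_update_smul hj]
    ext x
    have hfx := LinearMap.congr_fun hf x
    simp only [LinearMap.add_apply, LinearMap.smul_apply, LinearMap.sum_apply, smul_eq_mul, mul_add,
      sum_add_distrib, ← mul_assoc, ← sum_mul] at hfx ⊢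
    linarith

/-- The linear functional on `E × 𝕜` which agrees with the affine functional `q` on the points
`(y, 1)`. -/
def homogenization (q : E →ᵃ[𝕜] 𝕜) : E × 𝕜 →ₗ[𝕜] 𝕜 :=
  q.linear.coprod (LinearMap.toSpanSingleton 𝕜 𝕜 (q 0))

omit [LinearOrder 𝕜] [IsStrictOrderedRing 𝕜] in
lemma homogenization_apply_one (q : E →ᵃ[𝕜] 𝕜) (y : E) : homogenization q (y, 1) = q y := by
  simpa [homogenization] using (congrFun q.decomp y).symm

lemma homogenization_nonneg_iff (q : E →ᵃ[𝕜] 𝕜) {x : E × 𝕜} (hx : 0 < x.2) :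
    0 ≤ homogenization q x ↔ 0 ≤ q (x.2⁻¹ • x.1) := by
  have : x = x.2 • (x.2⁻¹ • x.1, (1 : 𝕜)) := Prod.ext (by simp [smul_inv_smul₀ hx.ne']) (by simp)
  rw [this, map_smul, homogenization_apply_one, smul_eq_mul, mul_nonneg_iff_of_pos_left hx, ← this]

lemma homogenization_nonneg {g : ι → E →ᵃ[𝕜] 𝕜} {f : E →ᵃ[𝕜] 𝕜} {y₀ : E}
    (hy₀ : ∀ i, 0 ≤ g i y₀) (h : ∀ y, (∀ i, 0 ≤ g i y) → 0 ≤ f y) {x : E × 𝕜} (hx : 0 ≤ x.2)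
    (hgx : ∀ i, 0 ≤ homogenization (g i) x) : 0 ≤ homogenization f x := by
  have hadd (q : E →ᵃ[𝕜] 𝕜) (ε : 𝕜) :
      homogenization q (x + ε • (y₀, 1)) = homogenization q x + ε * q y₀ := by
    rw [map_add, map_smul, homogenization_apply_one, smul_eq_mul]
  have hperturb {ε : 𝕜} (hε : 0 < ε) : 0 ≤ homogenization f x + ε * f y₀ := by
    have hpos : 0 < (x + ε • (y₀, 1)).2 := by simpa using add_pos_of_nonneg_of_pos hx hε
    rw [← hadd]
    refine (homogenization_nonneg_iff f hpos).2 (h _ fun i =>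
      (homogenization_nonneg_iff (g i) hpos).1 ?_)
    rw [hadd]
    exact add_nonneg (hgx i) (mul_nonneg hε.le (hy₀ i))
  have hf₀ := h y₀ hy₀
  refine le_of_forall_pos_le_add fun δ hδ => (hperturb (div_pos hδ (add_pos_of_nonneg_of_pos hf₀
    one_pos))).trans ?_
  gcongr
  rw [div_mul_eq_mul_div]
  exact div_le_of_le_mul₀ (by positivity) hδ.le (by gcongr; simp)

/-- Farkas' lemma, affine form. -/
theorem exists_nonneg_eq_add_sum_mul [Fintype ι] {g : ι → E →ᵃ[𝕜] 𝕜} {f : E →ᵃ[𝕜] 𝕜} {y₀ : E}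
    (hy₀ : ∀ i, 0 ≤ g i y₀) (h : ∀ y, (∀ i, 0 ≤ g i y) → 0 ≤ f y) :
    ∃ c : Option ι → 𝕜, (∀ i, 0 ≤ c i) ∧ ∀ y, f y = c none + ∑ i, c (some i) * g i y := by
  obtain ⟨c, hc, hf⟩ := exists_nonneg_eq_sum_smul (f := homogenization f) univ
    (a := fun i => i.elim (LinearMap.snd 𝕜 E 𝕜) fun i => homogenization (g i)) fun x hx =>
      homogenization_nonneg hy₀ h (hx none (mem_univ _)) fun i => hx (some i) (mem_univ _)
  refine ⟨c, hc, fun y => ?_⟩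
  rw [← homogenization_apply_one, hf]
  simp [Fintype.sum_option, homogenization_apply_one]

end Farkas

section ExtendedFormulation

/-- The slack of the constraint `(M y) r ≤ q r`, as an affine functional of `y`. -/
def rowSlack {e k : Type*} [Fintype e] (M : Matrix k e ℝ) (q : k → ℝ) (r : k) :
    (e → ℝ) →ᵃ[ℝ] ℝ :=
  AffineMap.const ℝ _ (q r) - ((LinearMap.proj r).comp M.mulVecLin).toAffineMap

lemma rowSlack_apply {e k : Type*} [Fintype e] (M : Matrix k e ℝ) (q : k → ℝ) (r : k) (y : e → ℝ) :
    rowSlack M q r y = q r - M.mulVec y r := by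
  simp [rowSlack]

lemma exists_nonneg_eq_add_sum_mul_rowSlack {e k l : Type*} [Fintype e] [Fintype k] [Finite l]
    {A : Matrix k e ℝ} {b : k → ℝ} {C : Matrix l e ℝ} {d : l → ℝ} {f : (e → ℝ) →ᵃ[ℝ] ℝ}
    (hne : {y | (∀ r, A.mulVec y r ≤ b r) ∧ ∀ r, C.mulVec y r = d r}.Nonempty)
    (hf : ∀ y, (∀ r, A.mulVec y r ≤ b r) → (∀ r, C.mulVec y r = d r) → 0 ≤ f y) :
    ∃ c : Option k → ℝ, (∀ i, 0 ≤ c i) ∧ ∀ y, (∀ r, C.mulVec y r = d r) →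
      f y = c none + ∑ r, c (some r) * (b r - A.mulVec y r) := by
  have := Fintype.ofFinite l
  have hiff (y) : (∀ i, 0 ≤ Sum.elim (rowSlack A b) (Sum.elim (rowSlack C d) (-rowSlack C d)) i y) ↔
      (∀ r, A.mulVec y r ≤ b r) ∧ ∀ r, C.mulVec y r = d r := by
    simp [rowSlack_apply, ← forall_and, le_antisymm_iff]
  obtain ⟨y₀, hy₀⟩ := hne
  obtain ⟨c, hc, hfc⟩ := exists_nonneg_eq_add_sum_mul ((hiff y₀).2 hy₀) fun y hy =>
    hf y ((hiff y).1 hy).1 ((hiff y).1 hy).2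
  refine ⟨fun i => c (i.map .inl), fun i => hc _, fun y hy => ?_⟩
  simp [hfc, rowSlack_apply, hy]

/-- One direction of Yannakakis' theorem. -/
theorem IsEF.exists_slack_factorization {ι : Type} [Fintype ι] {P : Set (ι → ℝ)} {k : ℕ}
    (h : IsEF P k) :
    ∃ v : Option (Fin k) → (ι → ℝ) → ℝ, (∀ i, ∀ z ∈ P, 0 ≤ v i z) ∧ ∀ f : (ι → ℝ) →ᵃ[ℝ] ℝ,
      (∀ z ∈ P, 0 ≤ f z) →
        ∃ u : Option (Fin k) → ℝ, (∀ i, 0 ≤ u i) ∧ ∀ z ∈ P, f z = ∑ i, u i * v i z := by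
  obtain ⟨e, l, A, b, C, d, π, rfl⟩ := h
  choose! y hy hyz using fun z (hz : z ∈ π '' {y | (∀ r, A.mulVec y r ≤ b r) ∧
    ∀ r, C.mulVec y r = d r}) => hz
  refine ⟨fun i z => i.elim 1 fun r => b r - A.mulVec (y z) r, fun i z hz => ?_, fun f hf => ?_⟩
  · cases i with
    | none => exact zero_le_one
    | some r => exact sub_nonneg.2 ((hy z hz).1 r)
  · obtain hempty | hne :=
      {y | (∀ r, A.mulVec y r ≤ b r) ∧ ∀ r, C.mulVec y r = d r}.eq_empty_or_nonempty
    · exact ⟨0, fun _ => le_rfl, by simp [hempty]⟩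
    obtain ⟨c, hc, hfc⟩ := exists_nonneg_eq_add_sum_mul_rowSlack (f := f.comp π) hne
      fun y hA hC => hf _ ⟨y, ⟨hA, hC⟩, rfl⟩
    refine ⟨c, hc, fun z hz => ?_⟩
    rw [← hyz z hz, ← AffineMap.comp_apply, hfc _ (hy z hz).2, hyz z hz]
    simp [Fintype.sum_option]

lemma isEF_convexHull_range {ι : Type} [Fintype ι] {e : ℕ} (x : Fin e → ι → ℝ) :
    IsEF (convexHull ℝ (Set.range x)) e := by
  refine ⟨e, 1, -1, 0, fun _ _ => 1, fun _ => 1,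
    (Fintype.linearCombination ℝ x).toAffineMap, ?_⟩
  have hset : {y : Fin e → ℝ | (∀ r, (-1 : Matrix (Fin e) (Fin e) ℝ).mulVec y r ≤
      (0 : Fin e → ℝ) r) ∧ ∀ r : Fin 1, Matrix.mulVec (fun _ _ => 1) y r = (1 : ℝ)} =
      stdSimplex ℝ (Fin e) := by
    ext y
    simp [stdSimplex, Matrix.mulVec, dotProduct, Matrix.one_apply]
  rw [hset, ← convexHull_rangle_single_eq_stdSimplex, LinearMap.coe_toAffineMap,
    LinearMap.image_convexHull, ← Set.range_comp]
  congr 2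
  ext1 i
  simp [Fintype.linearCombination_apply_single]

lemma isEF_xc_convexHull {ι : Type} [Fintype ι] {s : Set (ι → ℝ)} (hs : s.Finite) :
    IsEF (convexHull ℝ s) (xc (convexHull ℝ s)) := by
  obtain ⟨n, x, -, rfl⟩ := hs.fin_param
  exact Nat.sInf_mem (s := {k | IsEF _ k}) ⟨n, isEF_convexHull_range x⟩

end ExtendedFormulation

section ApproximateSchedules

/-- The convex hull of the assignment vectors of the `α`-approximate schedules. -/
def approxPolytope {n : ℕ} (m : ℕ) (p : Fin n → ℕ) (α : ℕ) : Set (Fin m × Fin n → ℝ) :=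
  convexHull ℝ {x | ∃ σ : Fin n → Fin m, makespan p σ ≤ α * optMakespan n m p ∧ x = assignVec σ}

lemma isEF_xc_approxPolytope {n : ℕ} (m : ℕ) (p : Fin n → ℕ) (α : ℕ) :
    IsEF (approxPolytope m p α) (xc (approxPolytope m p α)) :=
  isEF_xc_convexHull ((Set.finite_range assignVec).subset fun _ ⟨σ, _, hx⟩ => ⟨σ, hx.symm⟩)

/-- With as many machines as jobs, every job can be given a machine of its own. -/
lemma optMakespan_self {n : ℕ} (p : Fin n → ℕ) : optMakespan n n p = univ.sup p := by
  refine le_antisymm ((Nat.sInf_le (Set.mem_range_self (f := makespan p) id)).trans_eq ?_) ?_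
  · have hload : load p id = p := funext fun i => by simp [load]
    rw [makespan, hload]
  · obtain ⟨σ, hσ⟩ := Nat.sInf_mem (s := {t | ∃ σ : Fin n → Fin n, makespan p σ = t}) ⟨_, id, rfl⟩
    rw [optMakespan, ← hσ]
    refine Finset.sup_le fun j _ => le_trans ?_ (le_sup (f := load p σ) (mem_univ (σ j)))
    simpa [load] using single_le_sum_of_canonicallyOrdered
      (f := fun j' => if σ j' = σ j then p j' else 0) (mem_univ j)

/-- The total cost of an assignment, as a linear function of the assignment vector. -/
def totalCost {n m : ℕ} (c : Fin n → Fin m → ℝ) : (Fin m × Fin n → ℝ) →ₗ[ℝ] ℝ :=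
  ∑ q : Fin m × Fin n, c q.2 q.1 • LinearMap.proj q

lemma totalCost_assignVec {n m : ℕ} (c : Fin n → Fin m → ℝ) (σ : Fin n → Fin m) :
    totalCost c (assignVec σ) = ∑ j, c j (σ j) := by
  simp [totalCost, assignVec, Fintype.sum_prod_type_right]

lemma exists_cost_factorization {n m : ℕ} {p : Fin n → ℕ} {α : ℕ} {T : Type*} {S : Set T}
    {c : T → Fin n → Fin m → ℝ}
    (hc : ∀ t ∈ S, ∀ σ, makespan p σ ≤ α * optMakespan n m p → 1 ≤ ∑ j, c t j (σ j)) :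
    ∃ (u : Option (Fin (xc (approxPolytope m p α))) → T → ℝ)
      (v : Option (Fin (xc (approxPolytope m p α))) → (Fin n → Fin m) → ℝ),
      (∀ i, ∀ t ∈ S, 0 ≤ u i t) ∧
      (∀ i σ, makespan p σ ≤ α * optMakespan n m p → 0 ≤ v i σ) ∧
      ∀ t ∈ S, ∀ σ, makespan p σ ≤ α * optMakespan n m p →
        ∑ i, u i t * v i σ = ∑ j, c t j (σ j) - 1 := by
  obtain ⟨v, hv, hfac⟩ := (isEF_xc_approxPolytope m p α).exists_slack_factorization
  let f (t : T) := (totalCost (c t)).toAffineMap - AffineMap.const ℝ _ 1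
  have hf (t σ) : f t (assignVec σ) = ∑ j, c t j (σ j) - 1 := by simp [f, totalCost_assignVec]
  have hnonneg (t) (ht : t ∈ S) : ∀ z ∈ approxPolytope m p α, 0 ≤ f t z := by
    refine fun z hz => convexHull_min ?_ ((convex_Ici (0 : ℝ)).affine_preimage (f t)) hz
    rintro _ ⟨σ, hσ, rfl⟩
    rw [Set.mem_preimage, hf]
    exact sub_nonneg.2 (hc t ht σ hσ)
  have hmem (σ) (hσ : makespan p σ ≤ α * optMakespan n m p) :
      assignVec σ ∈ approxPolytope m p α := subset_convexHull ℝ _ ⟨σ, hσ, rfl⟩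
  choose! u hu huv using fun t ht => hfac (f t) (hnonneg t ht)
  refine ⟨fun i t => u t i, fun i σ => v i (assignVec σ), fun i t ht => hu t ht i,
    fun i σ hσ => hv i _ (hmem σ hσ), fun t ht σ hσ => ?_⟩
  rw [← huv t ht _ (hmem σ hσ), hf]

variable {J : Type*} [Fintype J] [DecidableEq J]

lemma makespan_conj_le_iff {n : ℕ} (e : J ≃ Fin n) (q : J → ℕ) (s : J → J) (b : ℕ) :
    makespan (q ∘ e.symm) (e.conj s) ≤ b ↔ ∀ i, ∑ j with s j = i, q j ≤ b := by
  have hload (i) : load (q ∘ e.symm) (e.conj s) (e i) = ∑ j with s j = i, q j := by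
    rw [load, ← Equiv.sum_comp e, sum_filter]
    simp
  simp [makespan, ← hload, e.surjective.forall]

lemma exists_cost_factorization_of_equiv {n : ℕ} (e : J ≃ Fin n) {q : J → ℕ} {α : ℕ} {T : Type*}
    {S : Set T} {c : T → J → J → ℝ}
    (hc : ∀ t ∈ S, ∀ s : J → J, (∀ i, ∑ j with s j = i, q j ≤ α * univ.sup q) →
      1 ≤ ∑ j, c t j (s j)) :
    ∃ (u : Option (Fin (xc (approxPolytope n (q ∘ e.symm) α))) → T → ℝ)
      (v : Option (Fin (xc (approxPolytope n (q ∘ e.symm) α))) → (J → J) → ℝ),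
      (∀ i, ∀ t ∈ S, 0 ≤ u i t) ∧
      (∀ i s, (∀ i, ∑ j with s j = i, q j ≤ α * univ.sup q) → 0 ≤ v i s) ∧
      ∀ t ∈ S, ∀ s : J → J, (∀ i, ∑ j with s j = i, q j ≤ α * univ.sup q) →
        ∑ i, u i t * v i s = ∑ j, c t j (s j) - 1 := by
  have happrox (s : J → J) : makespan (q ∘ e.symm) (e.conj s) ≤
      α * optMakespan n n (q ∘ e.symm) ↔ ∀ i, ∑ j with s j = i, q j ≤ α * univ.sup q := by
    have hsup : univ.sup (q ∘ e.symm) = univ.sup q := by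
      rw [← sup_image, image_univ_equiv]
    rw [optMakespan_self, hsup, makespan_conj_le_iff]
  have hcost (t s) : ∑ j, c t (e.symm j) (e.symm (e.conj s j)) = ∑ j, c t j (s j) := by
    rw [← Equiv.sum_comp e]
    simp
  obtain ⟨u, v, hu, hv, huv⟩ := exists_cost_factorization (p := q ∘ e.symm) (α := α) (S := S)
    (c := fun t j i => c t (e.symm j) (e.symm i)) fun t ht σ hσ => by
      obtain ⟨s, rfl⟩ := e.conj.surjective σ
      rw [hcost]
      exact hc t ht s ((happrox s).1 hσ)
  refine ⟨u, fun i s => v i (e.conj s), hu, fun i s hs => hv i _ ((happrox s).2 hs),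
    fun t ht s hs => ?_⟩
  rw [huv t ht _ ((happrox s).2 hs), hcost]

end ApproximateSchedules

section MatchingCollapse

variable {V P : Type*}

/-- The map `φ` sends both ends of each edge of the matching `g` to one of them. -/
structure Collapses (φ : V → V) (g : Equiv.Perm V) : Prop where
  apply_eq_or : ∀ v, φ v = v ∨ φ v = g v
  apply_mate : ∀ v, φ (g v) = φ v

lemma exists_collapses {g : Equiv.Perm V} (hg : Function.Involutive g) :
    ∃ φ : V → V, Collapses φ g := by
  classical
  let _ : LinearOrder V := linearOrderOfSTO WellOrderingRel
  exact ⟨fun v => min v (g v), fun v => min_choice v (g v), fun v => by rw [hg v, min_comm]⟩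

namespace Collapses

variable {φ : V → V} {g : Equiv.Perm V}

lemma apply_apply (h : Collapses φ g) (v : V) : φ (φ v) = φ v := by
  obtain hv | hv := h.apply_eq_or v
  · rw [hv, hv]
  · rw [hv, h.apply_mate, hv]

lemma eq_or_eq_mate_of_apply_eq (h : Collapses φ g) (hg : Function.Involutive g) {v w : V}
    (hvw : φ v = φ w) : w = v ∨ w = g v := by
  obtain hv | hv := h.apply_eq_or v <;> obtain hw | hw := h.apply_eq_or w
  · exact .inl (hw.symm.trans (hvw.symm.trans hv))
  · exact .inr (by rw [← hv, hvw, hw, hg w])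
  · exact .inr (hw.symm.trans (hvw.symm.trans hv))
  · exact .inl (g.injective (hw.symm.trans (hvw.symm.trans hv)))

variable [Fintype V]

/-- On each crossing edge exactly one end changes sides. -/
lemma card_ne_eq_crossCount (h : Collapses φ g) (hg : Function.Involutive g) (U : V → Bool) :
    #{v | U (φ v) ≠ U v} = crossCount U g := by
  have hedge (v) : (if U (φ v) ≠ U v then 1 else 0) + (if U (φ (g v)) ≠ U (g v) then 1 else 0) =
      (if U v ∧ ¬ U (g v) then 1 else 0) + if U (g v) ∧ ¬ U (g (g v)) then 1 else 0 := by
    rw [h.apply_mate, hg v]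
    obtain hv | hv := h.apply_eq_or v <;> cases hU : U v <;> cases hU' : U (g v) <;>
      simp [hv, hU, hU']
  have hsum := sum_congr rfl fun v (_ : v ∈ univ) => hedge v
  rw [sum_add_distrib, sum_add_distrib, Equiv.sum_comp g fun v => if U (φ v) ≠ U v then 1 else 0,
    Equiv.sum_comp g fun v => if U v ∧ ¬ U (g v) then 1 else 0, ← card_filter,
    ← card_filter] at hsum
  rw [crossCount]
  lia

variable [DecidableEq V]

lemma card_fiber_le (h : Collapses φ g) (hg : Function.Involutive g) (w : V) :
    #{v | φ v = w} ≤ 2 := by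
  obtain hempty | ⟨v₀, hv₀⟩ := eq_empty_or_nonempty ({v | φ v = w} : Finset V)
  · simp [hempty]
  rw [mem_filter_univ] at hv₀
  refine (card_le_card (t := {v₀, g v₀}) fun v hv => ?_).trans card_le_two
  rw [mem_filter_univ] at hv
  simpa using h.eq_or_eq_mate_of_apply_eq hg (hv₀.trans hv.symm)

lemma two_mul_card_fixed_le (h : Collapses φ g) (hg : ∀ v, g v ≠ v) :
    2 * #{w | φ w = w} ≤ Fintype.card V := by
  refine two_mul_card_le_of_injective g.injective fun w hw hgw => hg w ?_
  rw [mem_filter_univ] at hw hgw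
  rw [← hgw, h.apply_mate, hw]

end Collapses

variable [Fintype V] [Fintype P] [DecidableEq V]

lemma IsPerfectMatching.exists_collapses_card_fiber_le {g : Equiv.Perm V} (hg : IsPerfectMatching g)
    (hcard : 2 * Fintype.card P ≤ Fintype.card V) :
    ∃ (φ : V → V) (f : P → V), Collapses φ g ∧
      ∀ w, #{v | φ v = w} + 2 * #{q | f q = w} ≤ 2 := by
  obtain ⟨φ, hφ⟩ := exists_collapses hg.involutive
  have hmoved : Fintype.card P ≤ #{w | φ w ≠ w} := by
    have := hφ.two_mul_card_fixed_le hg.apply_ne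
    have := card_filter_add_card_filter_not (s := univ) fun w => φ w = w
    rw [card_univ] at this
    lia
  obtain ⟨f, hf⟩ := Function.Embedding.exists_of_card_le_finset hmoved
  refine ⟨φ, f, hφ, fun w => ?_⟩
  by_cases hw : φ w = w
  · have : #{q | f q = w} = 0 := by
      simpa [filter_eq_empty_iff] using fun q (hq : f q = w) =>
        (mem_filter_univ _).1 (hf ⟨q, rfl⟩) (by rw [hq, hw])
    have := hφ.card_fiber_le hg.involutive w
    lia
  · have : #{v | φ v = w} = 0 := by
      simpa [filter_eq_empty_iff] using fun v (hv : φ v = w) => hw (by rw [← hv, hφ.apply_apply])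
    have : #{q | f q = w} ≤ 1 := card_le_one.2 fun q hq q' hq' =>
      f.injective (by rw [(mem_filter_univ q).1 hq, (mem_filter_univ q').1 hq'])
    lia

/-- By counting, all the inequalities are equalities, so all fibers of `φ` are even. -/
lemma not_oddCut_of_card_fiber_le (hcard : Fintype.card V = 2 * Fintype.card P) {φ : V → V}
    {f : P → V} (h : ∀ w, #{v | φ v = w} + 2 * #{q | f q = w} ≤ 2) {U : V → Bool}
    (hU : ∀ v, U (φ v) = U v) : ¬ OddCut U := by
  have htotal : ∑ w, (#{v | φ v = w} + 2 * #{q | f q = w}) = ∑ _w : V, 2 := by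
    rw [sum_add_distrib, ← mul_sum, ← card_eq_sum_card_fiberwise (by simp),
      ← card_eq_sum_card_fiberwise (by simp), sum_const, card_univ, card_univ, smul_eq_mul]
    lia
  have heq := (sum_eq_sum_iff_of_le fun w _ => h w).1 htotal
  have hfiber : #{v | U v} = ∑ w with U w, #{v | φ v = w} := by
    rw [card_eq_sum_card_fiberwise (f := φ) (t := {w | U w}) fun v hv => by simpa [hU] using hv]
    refine sum_congr rfl fun w hw => congrArg _ ?_
    rw [mem_filter_univ] at hw
    ext v
    simpa using fun hv : φ v = w => by rw [← hU, hv, hw]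
  rw [OddCut, Nat.not_odd_iff_even, hfiber]
  refine even_sum _ fun w _ => ?_
  exact ⟨1 - #{q | f q = w}, by have := heq w (mem_univ w); lia⟩

end MatchingCollapse

section HardInstance

/-- The jobs, and at the same time the machines, of the hard instance: a unit job for each vertex
in `V`, a filler job for each element of `P`, and `a` dummy jobs for each vertex in `V`. Only the
machines of the first kind are meant to be used. -/
abbrev HardJob (V P : Type*) (a : ℕ) := V ⊕ P ⊕ V × Fin a

variable {V P : Type*} {a : ℕ}

/-- The processing times of the hard instance. -/
def hardSize : HardJob V P a → ℕ
  | .inl _ => 1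
  | .inr _ => 2

lemma hardSize_eq_one_or_two : ∀ j : HardJob V P a, hardSize j = 1 ∨ hardSize j = 2
  | .inl _ => .inl rfl
  | .inr _ => .inr rfl

lemma sup_hardSize [Fintype V] [Fintype P] [Nonempty P] :
    univ.sup (hardSize : HardJob V P a → ℕ) = 2 := by
  refine le_antisymm (Finset.sup_le fun j _ => ?_) ?_
  · obtain h | h := hardSize_eq_one_or_two j <;> simp [h]
  · exact le_sup (f := (hardSize : HardJob V P a → ℕ))
      (mem_univ (.inr (.inl (Classical.arbitrary P))))

/-- The schedule that assigns the unit jobs by `φ`, the filler jobs by `f`, and each dummy job to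
the machine of its vertex. -/
def hardSchedule (φ : V → V) (f : P → V) : HardJob V P a → HardJob V P a
  | .inl v => .inl (φ v)
  | .inr (.inl q) => .inl (f q)
  | .inr (.inr (v, _)) => .inl v

variable [DecidableEq V]

/-- The cost of assigning a job to a machine, relative to the cut `U`. The schedules of cost `0` are
the hard schedules whose unit jobs all stay on their side of the cut. -/
def hardCost (U : V → Bool) : HardJob V P a → HardJob V P a → ℕ
  | .inl v, .inl w => if U w = U v then 0 else 1
  | .inr (.inl _), .inl _ => 0
  | .inr (.inr (v, _)), .inl w => if w = v then 0 else 1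
  | _, .inr _ => 1

lemma exists_eq_hardSchedule {U : V → Bool} {s : HardJob V P a → HardJob V P a}
    (hs : ∀ j, hardCost U j (s j) = 0) :
    ∃ (φ : V → V) (f : P → V), s = hardSchedule φ f ∧ ∀ v, U (φ v) = U v := by
  have husual (j) : ∃ w, s j = .inl w := by
    have := hs j
    rcases hw : s j with w | w
    · exact ⟨w, rfl⟩
    · simp [hw, hardCost] at this
  choose m hm using husual
  refine ⟨fun v => m (.inl v), fun q => m (.inr (.inl q)), funext fun j => ?_, fun v => ?_⟩
  · obtain v | q | ⟨v, k⟩ := j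
    · exact hm _
    · exact hm _
    · simpa [hm, hardCost, hardSchedule] using hs (.inr (.inr (v, k)))
  · simpa [hm, hardCost] using hs (.inl v)

variable [Fintype V] [Fintype P]

lemma sum_hardCost_hardSchedule (U : V → Bool) (φ : V → V) (f : P → V) :
    ∑ j : HardJob V P a, hardCost U j (hardSchedule φ f j) = #{v | U (φ v) ≠ U v} := by
  simp [Fintype.sum_sum_type, hardCost, hardSchedule, card_filter]

variable [DecidableEq P]

lemma sum_hardSize_hardSchedule (φ : V → V) (f : P → V) (w : V) :
    ∑ j : HardJob V P a with hardSchedule φ f j = .inl w, hardSize j =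
      #{v | φ v = w} + 2 * #{q | f q = w} + 2 * a := by
  have hdummy : ∑ v : V, ∑ _k : Fin a, (if v = w then 2 else 0) = 2 * a := by
    rw [sum_comm]
    simp [mul_comm]
  rw [sum_filter]
  simp only [Fintype.sum_sum_type, Fintype.sum_prod_type, hardSchedule, hardSize,
    Sum.inl.injEq, hdummy, card_filter, mul_sum, mul_ite, mul_one, mul_zero, add_assoc]

lemma sum_hardSize_hardSchedule_le_iff {φ : V → V} {f : P → V} :
    (∀ i : HardJob V P a, ∑ j with hardSchedule φ f j = i, hardSize j ≤ (a + 1) * 2) ↔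
      ∀ w, #{v | φ v = w} + 2 * #{q | f q = w} ≤ 2 := by
  have hunused (i : P ⊕ V × Fin a) :
      ∑ j : HardJob V P a with hardSchedule φ f j = .inr i, hardSize j = 0 := by
    rw [sum_filter]
    simp [Fintype.sum_sum_type, hardSchedule]
  rw [Sum.forall]
  simp only [hunused, zero_le, implies_true, and_true, sum_hardSize_hardSchedule]
  exact forall_congr' fun w => by lia

lemma one_le_sum_hardCost (hcard : Fintype.card V = 2 * Fintype.card P) {U : V → Bool}
    (hU : OddCut U) {s : HardJob V P a → HardJob V P a}
    (hs : ∀ i, ∑ j with s j = i, hardSize j ≤ (a + 1) * 2) : 1 ≤ ∑ j, hardCost U j (s j) := by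
  rw [Nat.one_le_iff_ne_zero, Ne, sum_eq_zero_iff]
  intro hzero
  obtain ⟨φ, f, rfl, hφ⟩ := exists_eq_hardSchedule fun j => hzero j (mem_univ j)
  exact not_oddCut_of_card_fiber_le hcard (sum_hardSize_hardSchedule_le_iff.1 hs) hφ hU

omit [DecidableEq V] [DecidableEq P]

variable (V P a) in
/-- The polytope of the `(a + 1)`-approximate schedules of the hard instance. -/
def hardPolytope : Set (Fin (Fintype.card (HardJob V P a)) × Fin (Fintype.card (HardJob V P a)) →
    ℝ) :=
  approxPolytope _ (hardSize ∘ (Fintype.equivFin (HardJob V P a)).symm) (a + 1)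

theorem exists_crossCount_factorization [Nonempty P]
    (hcard : Fintype.card V = 2 * Fintype.card P) :
    ∃ (u : Option (Fin (xc (hardPolytope V P a))) → (V → Bool) → ℝ)
      (v : Option (Fin (xc (hardPolytope V P a))) → Equiv.Perm V → ℝ),
      (∀ i U, OddCut U → 0 ≤ u i U) ∧ (∀ i g, IsPerfectMatching g → 0 ≤ v i g) ∧
        ∀ U g, OddCut U → IsPerfectMatching g → ∑ i, u i U * v i g = crossCount U g - 1 := by
  classical
  obtain ⟨u, v, hu, hv, huv⟩ := exists_cost_factorization_of_equiv
    (Fintype.equivFin (HardJob V P a)) (q := hardSize) (α := a + 1) (S := {U | OddCut U})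
    (c := fun U j i => hardCost U j i) fun U hU s hs => by
      rw [sup_hardSize] at hs
      exact_mod_cast one_le_sum_hardCost hcard hU hs
  rw [sup_hardSize] at hv huv
  have : Nonempty V := Fintype.card_pos_iff.1 (by have := Fintype.card_pos (α := P); lia)
  choose! φ f hφ hf using fun (g : Equiv.Perm V) (hg : IsPerfectMatching g) =>
    hg.exists_collapses_card_fiber_le hcard.ge
  refine ⟨u, fun i g => v i (hardSchedule (φ g) (f g)), fun i U hU => hu i U hU,
    fun i g hg => hv i _ (sum_hardSize_hardSchedule_le_iff.2 (hf g hg)), fun U g hU hg => ?_⟩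
  rw [← (hφ g hg).card_ne_eq_crossCount hg.involutive U,
    ← sum_hardCost_hardSchedule (a := a) U (φ g) (f g)]
  push_cast
  exact huv U hU _ (sum_hardSize_hardSchedule_le_iff.2 (hf g hg))

variable (κ : Type*) [Fintype κ]

lemma card_vertex : Fintype.card (Vertex κ) = 2 * Fintype.card (Column κ) := by
  rw [Fintype.card_prod, Fintype.card_bool, mul_comm]

lemma card_hardJob (a : ℕ) : Fintype.card (HardJob (Vertex κ) (Column κ) a) =
    (6 * Fintype.card κ + 10) * (a + 1) + (3 * Fintype.card κ + 5) := by
  simp only [Fintype.card_prod, Fintype.card_sum, Fintype.card_fin, Fintype.card_bool]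
  ring

lemma exp_le_xc_hardPolytope (a : ℕ) : Real.exp ((Fintype.card κ + 1) / 7200) ≤
    18000 * (xc (hardPolytope (Vertex κ) (Column κ) a) + 1) := by
  obtain ⟨u, v, hu, hv, huv⟩ := exists_crossCount_factorization (a := a) (card_vertex κ)
  simpa using exp_le_of_crossCount_factorization hu hv huv

end HardInstance

lemma two_pow_le_of_exp_le {n : ℕ} (hn : 1 ≤ n) {x : ℝ}
    (hx : Real.exp (20 * n) ≤ 18000 * (x + 1)) : (2 : ℝ) ^ n ≤ x := by
  have hexp : (2 : ℝ) ^ (20 * n) ≤ Real.exp (20 * n) := by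
    have := pow_le_pow_left₀ two_pos.le
      (Real.exp_one_gt_d9.le.trans' (by norm_num : (2 : ℝ) ≤ _)) (20 * n)
    rwa [← Real.exp_nat_mul, mul_one, Nat.cast_mul, Nat.cast_ofNat] at this
  have hsplit : (2 : ℝ) ^ (20 * n) = 2 ^ n * 2 ^ (19 * n) := by
    rw [← pow_add]
    congr 1
    ring
  have hbig : (2 : ℝ) ^ 19 ≤ 2 ^ (19 * n) := pow_le_pow_right₀ one_le_two (by lia)
  have hone : (1 : ℝ) ≤ 2 ^ n := one_le_pow₀ one_le_two
  nlinarith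

theorem all_approx_schedules_large_xc_general :
    ∃ C : ℝ, 1 ≤ C ∧ ∀ n : ℕ, 1 ≤ n → ∀ α : ℕ, 1 ≤ α →
      ∃ (nJ m : ℕ) (p : Fin nJ → ℕ),
        (nJ : ℝ) ≤ C * α * n ∧ (m : ℝ) ≤ C * α * n ∧
        (∀ j, p j = 1 ∨ p j = 2) ∧
        (2 : ℝ) ^ n ≤
          (xc (convexHull ℝ {x : Fin m × Fin nJ → ℝ | ∃ σ : Fin nJ → Fin m,
            makespan p σ ≤ α * optMakespan nJ m p ∧ x = assignVec σ}) : ℝ) := by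
  refine ⟨1300000, by norm_num, fun n hn α hα => ?_⟩
  obtain ⟨a, rfl⟩ := Nat.exists_eq_add_of_le' hα
  let κ := Fin (144000 * n)
  let J := HardJob (Vertex κ) (Column κ) a
  have hcard : (Fintype.card J : ℝ) ≤ 1300000 * (a + 1 : ℕ) * n := by
    rw [card_hardJob, Fintype.card_fin]
    norm_cast
    nlinarith [Nat.mul_le_mul_left a hn]
  refine ⟨_, _, hardSize ∘ (Fintype.equivFin J).symm, hcard, hcard,
    fun _ => hardSize_eq_one_or_two _, two_pow_le_of_exp_le hn ?_⟩
  refine (Real.exp_le_exp.2 ?_).trans (exp_le_xc_hardPolytope κ a)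
  rw [Fintype.card_fin]
  push_cast
  linarith

lemma two_rpow_log_two_mul_div_log_le {n : ℕ} (hn : 2 ≤ n) :
    (2 : ℝ) ^ (Real.log 2 * n / Real.log n) ≤ 2 ^ n := by
  have hlog2 : 0 < Real.log 2 := Real.log_pos one_lt_two
  have hlog : Real.log 2 ≤ Real.log n := Real.log_le_log two_pos (by exact_mod_cast hn)
  rw [← Real.rpow_natCast]
  refine Real.rpow_le_rpow_of_exponent_le one_le_two ?_
  rw [div_le_iff₀ (hlog2.trans_le hlog), mul_comm]
  gcongr

/-- For every `n` and every integer `α ≥ 1` there is an instance with `O(α·n)` jobs and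
machines and processing times in `{1,2}` such that the convex hull of the assignment
vectors of all `α`-approximate schedules has extension complexity at least
`2^(c·n/log n)`. -/
theorem all_approx_schedules_large_xc :
    ∃ c C : ℝ, 0 < c ∧ 1 ≤ C ∧ ∀ n : ℕ, 2 ≤ n → ∀ α : ℕ, 1 ≤ α →
      ∃ (nJ m : ℕ) (p : Fin nJ → ℕ),
        (nJ : ℝ) ≤ C * α * n ∧ (m : ℝ) ≤ C * α * n ∧
        (∀ j, p j = 1 ∨ p j = 2) ∧
        (2 : ℝ) ^ (c * n / Real.log n) ≤
          (xc (convexHull ℝ {x : Fin m × Fin nJ → ℝ | ∃ σ : Fin nJ → Fin m,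
            makespan p σ ≤ α * optMakespan nJ m p ∧ x = assignVec σ}) : ℝ) := by
  obtain ⟨C, hC, h⟩ := all_approx_schedules_large_xc_general
  refine ⟨Real.log 2, C, Real.log_pos one_lt_two, hC, fun n hn α hα => ?_⟩
  obtain ⟨nJ, m, p, hnJ, hm, hp, hxc⟩ := h n (one_le_two.trans hn) α hα
  exact ⟨nJ, m, p, hnJ, hm, hp, (two_rpow_log_two_mul_div_log_le hn).trans hxc⟩
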